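/- Let A1 and A2 be circulant Hermitian N×N complex matrices. Then there exist unitary N×N matrices V1 and V2 and diagonal matrices Λ1 and Λ2 such that A1 = V1 Λ1 V1ᴴ, A2 = V2 Λ2 V2ᴴ, and V1·V2 = I. Consequently, the infimum over all such unitary eigenvector matrices V1 of A1 and V2 of A2 of the Frobenius norm ‖V1·V2 − I‖_F equals 0 (any circulant graph is a dual of any circulant graph). -/

import Mathlib

open Matrix

/-- Frobenius norm of a complex square matrix. -/
noncomputable def frobNorm {N : ℕ} (M : Matrix (Fin N) (Fin N) ℂ) : ℝ :=
  Real.sqrt (∑ i, ∑ j, ‖M i j‖ ^ 2)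

/-!
For a primitive additive character `ψ` of a finite commutative ring, the normalised matrix
`F i j = ψ (i * j) / √|R|` is unitary and its columns are eigenvectors of every circulant matrix.
Since `Fᴴ` is the same matrix built from `ψ⁻¹`, its columns are also eigenvectors of every circulant
matrix. Hence `V1 = F` and `V2 = Fᴴ` serve for all pairs of circulant matrices at once, and
`F * Fᴴ = 1`.
-/

section Fourier

variable {R 𝕜 : Type*} [CommRing R] [Fintype R] [RCLike 𝕜]

/-- The normalised discrete Fourier matrix of a finite commutative ring with respect to an additive
character; for `ZMod N` with its standard character it is the usual `N × N` one. -/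
noncomputable def fourierMatrix (ψ : AddChar R 𝕜) : Matrix R R 𝕜 :=
  Matrix.of fun i j ↦ (√(Fintype.card R : ℝ) : 𝕜)⁻¹ * ψ (i * j)

/-- The eigenvalue of `circulant v` on the column `k` of `fourierMatrix ψ`, that is, the
unnormalised Fourier transform of `v` at `k`. -/
noncomputable def circulantEigenvalue (ψ : AddChar R 𝕜) (v : R → 𝕜) (k : R) : 𝕜 :=
  ∑ j, v j * ψ (-(j * k))

theorem circulant_mul_fourierMatrix [DecidableEq R] (ψ : AddChar R 𝕜) (v : R → 𝕜) :
    circulant v * fourierMatrix ψ = fourierMatrix ψ * diagonal (circulantEigenvalue ψ v) := by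
  ext i k
  rw [mul_diagonal, mul_apply, circulantEigenvalue, Finset.mul_sum]
  refine Fintype.sum_equiv (Equiv.subLeft i) _ _ fun j ↦ ?_
  have character_split : ψ (j * k) = ψ (i * k) * ψ (-((i - j) * k)) := by
    rw [← AddChar.map_add_eq_mul]
    ring_nf
  simp only [circulant_apply, fourierMatrix, of_apply, Equiv.subLeft_apply, character_split]
  ring

theorem conjTranspose_fourierMatrix (ψ : AddChar R 𝕜) :
    (fourierMatrix ψ)ᴴ = fourierMatrix ψ⁻¹ := by
  ext i j
  simp [fourierMatrix, AddChar.map_neg_eq_conj, mul_comm j i]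

theorem fourierMatrix_mul_fourierMatrix_inv [DecidableEq R] {ψ : AddChar R 𝕜}
    (hψ : ψ.IsPrimitive) : fourierMatrix ψ * fourierMatrix ψ⁻¹ = 1 := by
  ext i k
  have normalization :
      (√(Fintype.card R : ℝ) : 𝕜)⁻¹ * (√(Fintype.card R : ℝ) : 𝕜)⁻¹ = (Fintype.card R : 𝕜)⁻¹ := by
    rw [← mul_inv, ← RCLike.ofReal_mul, Real.mul_self_sqrt (Nat.cast_nonneg _),
      RCLike.ofReal_natCast]
  have entry_mul (j : R) : fourierMatrix ψ i j * fourierMatrix ψ⁻¹ j k =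
      (Fintype.card R : 𝕜)⁻¹ * ψ (j * (i - k)) := by
    have character_split : ψ (j * (i - k)) = ψ (i * j) * ψ (-(j * k)) := by
      rw [← AddChar.map_add_eq_mul]
      ring_nf
    simp only [fourierMatrix, of_apply, AddChar.inv_apply]
    rw [character_split, ← normalization]
    ring
  calc (fourierMatrix ψ * fourierMatrix ψ⁻¹) i k
      = (Fintype.card R : 𝕜)⁻¹ * ∑ j, ψ (j * (i - k)) := by
        simp only [mul_apply, entry_mul, Finset.mul_sum]
    _ = (Fintype.card R : 𝕜)⁻¹ * if i = k then (Fintype.card R : 𝕜) else 0 := by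
        simp only [AddChar.sum_mulShift _ hψ, sub_eq_zero, Nat.cast_ite, Nat.cast_zero]
    _ = (1 : Matrix R R 𝕜) i k := by
        simp [one_apply]

theorem fourierMatrix_mem_unitaryGroup [DecidableEq R] {ψ : AddChar R 𝕜} (hψ : ψ.IsPrimitive) :
    fourierMatrix ψ ∈ unitaryGroup R 𝕜 := by
  rw [mem_unitaryGroup_iff, star_eq_conjTranspose, conjTranspose_fourierMatrix,
    fourierMatrix_mul_fourierMatrix_inv hψ]

theorem circulant_eq_of_fourierMatrix_mem_unitaryGroup [DecidableEq R] {ψ : AddChar R 𝕜}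
    (hψ : fourierMatrix ψ ∈ unitaryGroup R 𝕜) (v : R → 𝕜) :
    circulant v =
      fourierMatrix ψ * diagonal (circulantEigenvalue ψ v) * (fourierMatrix ψ)ᴴ := by
  rw [← circulant_mul_fourierMatrix, Matrix.mul_assoc, ← star_eq_conjTranspose,
    mem_unitaryGroup_iff.mp hψ, Matrix.mul_one]

theorem exists_unitary_forall_circulant_eq_of_isPrimitive [DecidableEq R] {ψ : AddChar R 𝕜}
    (hψ : ψ.IsPrimitive) :
    ∃ V ∈ unitaryGroup R 𝕜, ∀ v : R → 𝕜,
      (∃ d, circulant v = V * diagonal d * Vᴴ) ∧ ∃ d, circulant v = Vᴴ * diagonal d * V := by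
  have hF := fourierMatrix_mem_unitaryGroup hψ
  have hF_inv : fourierMatrix ψ⁻¹ ∈ unitaryGroup R 𝕜 := by
    rw [← conjTranspose_fourierMatrix]
    exact Unitary.star_mem hF
  refine ⟨fourierMatrix ψ, hF, fun v ↦
    ⟨⟨_, circulant_eq_of_fourierMatrix_mem_unitaryGroup hF v⟩, circulantEigenvalue ψ⁻¹ v, ?_⟩⟩
  simpa only [conjTranspose_fourierMatrix, inv_inv] using
    circulant_eq_of_fourierMatrix_mem_unitaryGroup hF_inv v

end Fourier

theorem exists_unitary_forall_circulant_eq (N : ℕ) :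
    ∃ V ∈ unitaryGroup (Fin N) ℂ, ∀ v : Fin N → ℂ,
      (∃ d, circulant v = V * diagonal d * Vᴴ) ∧ ∃ d, circulant v = Vᴴ * diagonal d * V := by
  cases N with
  | zero => exact ⟨1, one_mem _, fun v ↦ ⟨⟨v, Subsingleton.elim _ _⟩, v, Subsingleton.elim _ _⟩⟩
  | succ n =>
    -- `ZMod (n + 1)` is by definition `Fin (n + 1)`.
    exact exists_unitary_forall_circulant_eq_of_isPrimitive (R := ZMod (n + 1))
      (ZMod.isPrimitive_stdAddChar (n + 1))

theorem frobNorm_nonneg {N : ℕ} (M : Matrix (Fin N) (Fin N) ℂ) : 0 ≤ frobNorm M :=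
  Real.sqrt_nonneg _

theorem frobNorm_zero (N : ℕ) : frobNorm (0 : Matrix (Fin N) (Fin N) ℂ) = 0 := by
  simp [frobNorm]

theorem circulant_dual_circulant_general {N : ℕ} (A1 A2 : Matrix (Fin N) (Fin N) ℂ)
    (h1 : ∃ v : Fin N → ℂ, A1 = Matrix.circulant v)
    (h2 : ∃ v : Fin N → ℂ, A2 = Matrix.circulant v) :
    (∃ V1 V2 Λ1 Λ2 : Matrix (Fin N) (Fin N) ℂ,
      V1ᴴ * V1 = 1 ∧ V2ᴴ * V2 = 1 ∧ Λ1.IsDiag ∧ Λ2.IsDiag ∧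
      A1 = V1 * Λ1 * V1ᴴ ∧ A2 = V2 * Λ2 * V2ᴴ ∧ V1 * V2 = 1) ∧
    sInf {x : ℝ | ∃ V1 V2 Λ1 Λ2 : Matrix (Fin N) (Fin N) ℂ,
      V1ᴴ * V1 = 1 ∧ V2ᴴ * V2 = 1 ∧ Λ1.IsDiag ∧ Λ2.IsDiag ∧
      A1 = V1 * Λ1 * V1ᴴ ∧ A2 = V2 * Λ2 * V2ᴴ ∧ x = frobNorm (V1 * V2 - 1)} = 0 := by
  obtain ⟨v, rfl⟩ := h1
  obtain ⟨w, rfl⟩ := h2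
  obtain ⟨V, hV, circulant_eq⟩ := exists_unitary_forall_circulant_eq N
  obtain ⟨d1, hd1⟩ := (circulant_eq v).1
  obtain ⟨d2, hd2⟩ := (circulant_eq w).2
  have hVV : Vᴴ * V = 1 := mem_unitaryGroup_iff'.mp hV
  have hVV' : V * Vᴴ = 1 := mem_unitaryGroup_iff.mp hV
  have hVH : Vᴴᴴ * Vᴴ = 1 := by rwa [conjTranspose_conjTranspose]
  have hd2' : circulant w = Vᴴ * diagonal d2 * Vᴴᴴ := by rwa [conjTranspose_conjTranspose]
  refine ⟨⟨V, Vᴴ, diagonal d1, diagonal d2, hVV, hVH, isDiag_diagonal _, isDiag_diagonal _,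
    hd1, hd2', hVV'⟩, IsLeast.csInf_eq ⟨?zero_attained, ?lower_bound⟩⟩
  case zero_attained =>
    refine ⟨V, Vᴴ, diagonal d1, diagonal d2, hVV, hVH, isDiag_diagonal _, isDiag_diagonal _,
      hd1, hd2', ?_⟩
    rw [hVV', sub_self, frobNorm_zero]
  case lower_bound =>
    rintro _ ⟨V1, V2, -, -, -, -, -, -, -, -, rfl⟩
    exact frobNorm_nonneg (V1 * V2 - 1)

/-- Any circulant (Hermitian) graph is a dual of any circulant (Hermitian) graph:
there are unitary eigenvector matrices `V1` of `A1` and `V2` of `A2` with `V1 * V2 = I`,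
and hence the dualness (infimum of `‖V1 V2 − I‖_F`) is `0`. -/
theorem circulant_dual_circulant {N : ℕ} (A1 A2 : Matrix (Fin N) (Fin N) ℂ)
    (h1 : ∃ v : Fin N → ℂ, A1 = Matrix.circulant v)
    (h2 : ∃ v : Fin N → ℂ, A2 = Matrix.circulant v)
    (hH1 : A1.IsHermitian) (hH2 : A2.IsHermitian) :
    (∃ V1 V2 Λ1 Λ2 : Matrix (Fin N) (Fin N) ℂ,
      V1ᴴ * V1 = 1 ∧ V2ᴴ * V2 = 1 ∧ Λ1.IsDiag ∧ Λ2.IsDiag ∧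
      A1 = V1 * Λ1 * V1ᴴ ∧ A2 = V2 * Λ2 * V2ᴴ ∧ V1 * V2 = 1) ∧
    sInf {x : ℝ | ∃ V1 V2 Λ1 Λ2 : Matrix (Fin N) (Fin N) ℂ,
      V1ᴴ * V1 = 1 ∧ V2ᴴ * V2 = 1 ∧ Λ1.IsDiag ∧ Λ2.IsDiag ∧
      A1 = V1 * Λ1 * V1ᴴ ∧ A2 = V2 * Λ2 * V2ᴴ ∧ x = frobNorm (V1 * V2 - 1)} = 0 :=
  circulant_dual_circulant_general A1 A2 h1 h2
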